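/- arXiv:2105.01751 — 3 statements merged into one kernel-verified Lean document; each statement's English description precedes it below -/
import Mathlib

section
/- Let f_1, …, f_k ∈ F[x_1,…,x_n] be F-linearly independent polynomials, each of total degree at most d, and let S ⊆ F be a finite nonempty set. If a_1, …, a_k are chosen independently and uniformly at random from S^n, then the probability that the k×k matrix M with entries M_{ij} = f_j(a_i) is NOT invertible is at most kd/|S|. -/
open MvPolynomial
open scoped Classical

/-!
Let `M` be the matrix whose `i`-th row is `f` in its own fresh block of variables. The coefficient
of `det M` at a family of monomials `m`, one for each block, is the minor `det (coeff (m i) (f j))`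
of the coefficient array of `f`. Linear independence makes one of these minors nonzero, so `det M`
is a nonzero polynomial, of degree at most the sum of the degrees of the `f j`, and the
Schwartz-Zippel lemma applies to it.
-/

section Minors

variable {ι α R : Type*} [CommRing R] [Nontrivial R]

lemma exists_det_apply_ne_zero_of_linearIndependent_fin {k : ℕ} {v : Fin k → α → R}
    (hv : LinearIndependent R v) :
    ∃ a : Fin k → α, (Matrix.of fun i j => v j (a i)).det ≠ 0 := by
  induction k with
  | zero => exact ⟨Fin.elim0, by simp⟩
  | succ k ih =>
    obtain ⟨a, ha⟩ := ih (hv.comp Fin.succ (Fin.succ_injective k))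
    by_contra! hdet
    let minor (j : Fin (k + 1)) : R := (Matrix.of fun i l => v (j.succAbove l) (a i)).det
    let bordered (x : α) : Matrix (Fin (k + 1)) (Fin (k + 1)) R :=
      Matrix.of fun i j => v j (Fin.cons (α := fun _ => α) x a i)
    -- Expand along the free top row: if all bordered determinants vanish, the `v j` are dependent.
    have relation : ∑ j : Fin (k + 1), ((-1) ^ (j : ℕ) * minor j) • v j = 0 := by
      ext x
      calc (∑ j : Fin (k + 1), ((-1) ^ (j : ℕ) * minor j) • v j) x
          = ∑ j : Fin (k + 1), (-1) ^ (j : ℕ) * v j x * minor j := by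
            simp only [Finset.sum_apply, Pi.smul_apply, smul_eq_mul, mul_right_comm]
        _ = (bordered x).det := (Matrix.det_succ_row_zero (bordered x)).symm
        _ = 0 := hdet _
    have minor_zero : minor 0 = 0 := by
      simpa using Fintype.linearIndependent_iff.1 hv _ relation 0
    exact ha minor_zero

lemma exists_det_apply_ne_zero_of_linearIndependent [Fintype ι] [DecidableEq ι] {v : ι → α → R}
    (hv : LinearIndependent R v) :
    ∃ a : ι → α, (Matrix.of fun i j => v j (a i)).det ≠ 0 := by
  let e := Fintype.equivFin ι
  obtain ⟨a, ha⟩ :=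
    exists_det_apply_ne_zero_of_linearIndependent_fin (hv.comp e.symm e.symm.injective)
  refine ⟨a ∘ e, ?_⟩
  rw [← Matrix.det_submatrix_equiv_self e] at ha
  simpa [Matrix.submatrix] using ha

end Minors

section GenericMatrix

variable {ι κ σ R : Type*}

lemma sum_mapDomain_prodMk_apply {M : Type*} [Fintype ι] [AddCommMonoid M]
    (m : ι → σ →₀ M) (i : ι) (x : σ) :
    (∑ i', (m i').mapDomain (Prod.mk i')) (i, x) = m i x := by
  rw [Finsupp.finsetSum_apply, Finset.sum_eq_single i]
  · exact Finsupp.mapDomain_apply (Prod.mk_right_injective i) _ _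
  · intro i' _ hne
    exact Finsupp.mapDomain_of_notMem_range _ _ (by simp [hne])
  · simp

lemma sum_mapDomain_prodMk_injective {M : Type*} [Fintype ι] [AddCommMonoid M] :
    Function.Injective fun m : ι → σ →₀ M => ∑ i, (m i).mapDomain (Prod.mk i) := by
  intro m m' h
  ext i x
  simpa only [sum_mapDomain_prodMk_apply] using DFunLike.congr_fun h (i, x)

lemma coeff_prod_rename_prodMk [Fintype ι] [CommSemiring R]
    (g : ι → MvPolynomial σ R) (m : ι → σ →₀ ℕ) :
    coeff (∑ i, (m i).mapDomain (Prod.mk i)) (∏ i, rename (Prod.mk i) (g i)) =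
      ∏ i, coeff (m i) (g i) := by
  have expand : ∏ i, rename (Prod.mk i) (g i) =
      ∑ s ∈ Fintype.piFinset fun i => (g i).support,
        monomial (∑ i, (s i).mapDomain (Prod.mk i)) (∏ i, coeff (s i) (g i)) := by
    simp_rw [monomial_sum_prod, ← rename_monomial]
    rw [← Finset.prod_univ_sum (fun i => (g i).support)
      fun i s => rename (Prod.mk i) (monomial s (coeff s (g i)))]
    simp_rw [← map_sum, ← as_sum]
  simp_rw [expand, coeff_sum, coeff_monomial, sum_mapDomain_prodMk_injective.eq_iff]
  rw [Finset.sum_ite_eq', ite_eq_left_iff]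
  intro hm
  obtain ⟨i, hi⟩ : ∃ i, coeff (m i) (g i) = 0 := by simpa using hm
  exact (Finset.prod_eq_zero (Finset.mem_univ i) hi).symm

/-- The matrix of values `f j (a i)` at generic points `a i`: the variable `(i, x)` stands for the
`x`-th coordinate of the `i`-th point. -/
noncomputable def genericEvalMatrix (ι : Type*) [CommSemiring R] (f : κ → MvPolynomial σ R) :
    Matrix ι κ (MvPolynomial (ι × σ) R) :=
  Matrix.of fun i j => rename (Prod.mk i) (f j)

variable [Fintype ι] [DecidableEq ι] [CommRing R]

lemma eval_uncurry_det_genericEvalMatrix (f : ι → MvPolynomial σ R) (a : ι → σ → R) :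
    eval (Function.uncurry a) (genericEvalMatrix ι f).det =
      (Matrix.of fun i j => eval (a i) (f j)).det := by
  rw [RingHom.map_det]
  congr 1
  ext i j
  exact eval_rename _ _ _

lemma coeff_det_genericEvalMatrix (f : ι → MvPolynomial σ R) (m : ι → σ →₀ ℕ) :
    coeff (∑ i, (m i).mapDomain (Prod.mk i)) (genericEvalMatrix ι f).det =
      (Matrix.of fun i j => coeff (m i) (f j)).det := by
  rw [← Matrix.det_transpose, ← Matrix.det_transpose (Matrix.of _), Matrix.det_apply,
    Matrix.det_apply, coeff_sum]
  refine Finset.sum_congr rfl fun τ _ => ?_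
  rw [Units.smul_def, Units.smul_def, coeff_smul]
  exact congrArg _ (coeff_prod_rename_prodMk (fun i => f (τ i)) m)

lemma det_genericEvalMatrix_ne_zero [Nontrivial R] {f : ι → MvPolynomial σ R}
    (hf : LinearIndependent R f) : (genericEvalMatrix ι f).det ≠ 0 := by
  have coeff_indep : LinearIndependent R fun j m => coeff m (f j) :=
    hf.map' (LinearMap.pi fun m => lcoeff R m) <|
      LinearMap.ker_eq_bot.2 fun p q h => MvPolynomial.ext p q (congrFun h)
  obtain ⟨m, hm⟩ := exists_det_apply_ne_zero_of_linearIndependent coeff_indep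
  exact ne_zero_iff.2 ⟨_, (coeff_det_genericEvalMatrix f m).trans_ne hm⟩

lemma totalDegree_det_le {A : Matrix ι ι (MvPolynomial σ R)} {d : ι → ℕ}
    (hA : ∀ i j, (A i j).totalDegree ≤ d j) : A.det.totalDegree ≤ ∑ j, d j := by
  rw [Matrix.det_apply]
  refine totalDegree_finsetSum_le fun τ _ => ?_
  calc (Equiv.Perm.sign τ • ∏ j, A (τ j) j).totalDegree
      ≤ (∏ j, A (τ j) j).totalDegree := totalDegree_smul_le _ _
    _ ≤ ∑ j, (A (τ j) j).totalDegree := totalDegree_finsetProd _ _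
    _ ≤ ∑ j, d j := Finset.sum_le_sum fun j _ => hA _ _

end GenericMatrix

section SchwartzZippel

variable {ι σ R : Type*} [Fintype ι] [Fintype σ] [DecidableEq ι] [DecidableEq σ]
  [CommRing R] [IsDomain R] [DecidableEq R]

lemma card_filter_eval_eq_zero_mul_card_le_fin {n : ℕ} {p : MvPolynomial (Fin n) R} (hp : p ≠ 0)
    (S : Finset R) :
    ((Fintype.piFinset fun _ : Fin n => S).filter fun x => eval x p = 0).card * S.card ≤
      p.totalDegree * (Fintype.piFinset fun _ : Fin n => S).card := by
  obtain rfl | hS := S.eq_empty_or_nonempty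
  · simp
  have hpos : (0 : ℚ≥0) < S.card := by exact_mod_cast hS.card_pos
  have h := (div_le_div_iff₀ (pow_pos hpos n) hpos).1 (schwartz_zippel_totalDegree hp S)
  rw [Fintype.card_piFinset_const]
  exact_mod_cast h

lemma card_filter_eval_eq_zero_mul_card_le {p : MvPolynomial σ R} (hp : p ≠ 0) (S : Finset R) :
    ((Fintype.piFinset fun _ : σ => S).filter fun x => eval x p = 0).card * S.card ≤
      p.totalDegree * (Fintype.piFinset fun _ : σ => S).card := by
  let e := Fintype.equivFin σ
  have rename_ne_zero : rename e p ≠ 0 := (map_ne_zero_iff _ (rename_injective e e.injective)).2 hp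
  have card_zeros : ((Fintype.piFinset fun _ : σ => S).filter fun x => eval x p = 0).card =
      ((Fintype.piFinset fun _ => S).filter fun y => eval y (rename e p) = 0).card :=
    Finset.card_equiv (e.arrowCongr (.refl R)) fun x => by
      have hx : (e.arrowCongr (.refl R)) x ∘ e = x := by ext; simp
      simp [eval_rename, hx, e.symm.forall_congr_left]
  rw [card_zeros]
  calc _ ≤ (rename e p).totalDegree * (Fintype.piFinset fun _ : Fin _ => S).card :=
        card_filter_eval_eq_zero_mul_card_le_fin rename_ne_zero S
    _ ≤ p.totalDegree * (Fintype.piFinset fun _ : σ => S).card := by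
        simpa using Nat.mul_le_mul_right _ (totalDegree_rename_le e p)

lemma card_filter_eval_uncurry_eq_zero_mul_card_le {p : MvPolynomial (ι × σ) R} (hp : p ≠ 0)
    (S : Finset R) :
    ((Fintype.piFinset fun _ : ι => Fintype.piFinset fun _ : σ => S).filter
        fun a => eval (Function.uncurry a) p = 0).card * S.card ≤
      p.totalDegree * (Fintype.piFinset fun _ : ι => Fintype.piFinset fun _ : σ => S).card := by
  have card_zeros : ((Fintype.piFinset fun _ : ι => Fintype.piFinset fun _ : σ => S).filter
      fun a => eval (Function.uncurry a) p = 0).card =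
      ((Fintype.piFinset fun _ : ι × σ => S).filter fun x => eval x p = 0).card :=
    Finset.card_equiv (Equiv.curry ι σ R).symm fun a => by simp
  have card_points : (Fintype.piFinset fun _ : ι => Fintype.piFinset fun _ : σ => S).card =
      (Fintype.piFinset fun _ : ι × σ => S).card := by
    simp [pow_mul']
  rw [card_zeros, card_points]
  exact card_filter_eval_eq_zero_mul_card_le hp S

end SchwartzZippel

theorem stmt_5_general {ι σ R : Type*} [Fintype ι] [Fintype σ] [DecidableEq ι] [DecidableEq σ]
    [CommRing R] [IsDomain R] [DecidableEq R]
    (f : ι → MvPolynomial σ R) {d : ι → ℕ} (hdeg : ∀ j, (f j).totalDegree ≤ d j)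
    (hind : LinearIndependent R f) (S : Finset R) (hS : S.Nonempty) :
    (((Fintype.piFinset fun _ : ι => Fintype.piFinset fun _ : σ => S).filter
        fun a => (Matrix.of fun i j => eval (a i) (f j)).det = 0).card : ℝ)
      / ((Fintype.piFinset fun _ : ι => Fintype.piFinset fun _ : σ => S).card : ℝ)
      ≤ (∑ j, (d j : ℝ)) / (S.card : ℝ) := by
  set Ω := Fintype.piFinset fun _ : ι => Fintype.piFinset fun _ : σ => S
  have hS_pos : 0 < S.card := hS.card_pos
  have hΩ_pos : 0 < Ω.card := by simp [Ω, hS_pos]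
  have hdet_deg : (genericEvalMatrix ι f).det.totalDegree ≤ ∑ j, d j :=
    totalDegree_det_le fun i j => (totalDegree_rename_le _ _).trans (hdeg j)
  have hcount := card_filter_eval_uncurry_eq_zero_mul_card_le
    (det_genericEvalMatrix_ne_zero hind) S
  simp only [eval_uncurry_det_genericEvalMatrix] at hcount
  rw [div_le_div_iff₀ (by exact_mod_cast hΩ_pos) (by exact_mod_cast hS_pos)]
  exact_mod_cast hcount.trans (Nat.mul_le_mul_right _ hdet_deg)

/-- For F-linearly independent f_1, …, f_k of total degree ≤ d and a finite
nonempty S ⊆ F, if a_1, …, a_k are independent uniform points of S^n then the probability that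
the matrix (f_j(a_i))_{ij} is NOT invertible is at most kd/|S|.  Probability is expressed by
counting over the sample space Ω = (S^n)^k of tuples of points. -/
theorem stmt_5 {F : Type*} [Field F] {n k d : ℕ}
    (f : Fin k → MvPolynomial (Fin n) F)
    (hdeg : ∀ j, (f j).totalDegree ≤ d)
    (hind : LinearIndependent F f)
    (S : Finset F) (hS : S.Nonempty) :
    (((Fintype.piFinset fun _ : Fin k => Fintype.piFinset fun _ : Fin n => S).filter
        (fun a : Fin k → Fin n → F =>
          ¬ IsUnit (Matrix.of fun i j : Fin k => eval (a i) (f j)))).card : ℝ)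
      / ((Fintype.piFinset fun _ : Fin k => Fintype.piFinset fun _ : Fin n => S).card : ℝ)
      ≤ (k * d : ℝ) / (S.card : ℝ) := by
  simpa [Matrix.isUnit_iff_isUnit_det] using stmt_5_general f hdeg hind S hS
end

section
/- Set-multilinear ΣΠΣ(k) circuits are closed under factoring: let f ∈ F[X] be a nonzero polynomial computed by a set-multilinear ΣΠΣ(k) circuit with respect to the partition X = X_1 ⊔ ⋯ ⊔ X_d, and suppose f = g·h in F[X]. Then there is a partition of {1,…,d} into two disjoint sets A_1 and A_2 such that g is set-multilinear with respect to ⊔_{j∈A_1} X_j and h is set-multilinear with respect to ⊔_{j∈A_2} X_j (in particular, no block X_j contains a variable occurring in g and a variable occurring in h); moreover, g is computed by a set-multilinear ΣΠΣ(k) circuit with respect to the partition ⊔_{j∈A_1} X_j. -/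
open MvPolynomial

/-! Grade monomials by how many variables they take from each block; set-multilinear polynomials
are homogeneous for this multigrading. If `g` or `h` had two weights, then two different pairs of
weights would have a sum attained only once, so `g * h` would have two nonzero components; hence the
factors of a set-multilinear polynomial are set-multilinear, on complementary collections of
blocks. Substituting a point where `h` does not vanish for the variables in the blocks of `h` turns
`f = g * h` into `g` up to a nonzero constant, and each gate of the circuit into a scalar times its
part on the blocks of `g`. Such a point exists over every field because `h` has degree at most one
in each variable. -/

section WeightedHomogeneous

variable {σ M R : Type*} [AddCommMonoid M] [CommSemiring R] {w : σ → M} {p q : MvPolynomial σ R}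
  {a b N : M}

section WeightSupport

variable [DecidableEq M]

/-- The weights of the monomials of `p`, that is, the indices of its nonzero weighted homogeneous
components. -/
noncomputable def weightSupport (w : σ → M) (p : MvPolynomial σ R) : Finset M :=
  p.support.image (Finsupp.weight w)

lemma weight_mem_weightSupport {m : σ →₀ ℕ} (hm : coeff m p ≠ 0) :
    Finsupp.weight w m ∈ weightSupport w p :=
  Finset.mem_image_of_mem _ (mem_support_iff.2 hm)

lemma weightSupport_nonempty (hp : p ≠ 0) : (weightSupport w p).Nonempty :=
  (support_nonempty.2 hp).image _

lemma weightedHomogeneousComponent_ne_zero (ha : a ∈ weightSupport w p) :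
    weightedHomogeneousComponent w a p ≠ 0 := by
  obtain ⟨m, hm, rfl⟩ := Finset.mem_image.1 ha
  refine ne_zero_iff.2 ⟨m, ?_⟩
  rwa [coeff_weightedHomogeneousComponent, if_pos rfl, ← mem_support_iff]

lemma isWeightedHomogeneous_of_card_weightSupport_le_one (hcard : (weightSupport w p).card ≤ 1)
    (ha : a ∈ weightSupport w p) : IsWeightedHomogeneous w p a :=
  fun _ hm => Finset.card_le_one.1 hcard _ (weight_mem_weightSupport hm) _ ha

lemma weightedHomogeneousComponent_mul_of_uniqueAdd
    (hab : UniqueAdd (weightSupport w p) (weightSupport w q) a b) :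
    weightedHomogeneousComponent w (a + b) (p * q) =
      weightedHomogeneousComponent w a p * weightedHomogeneousComponent w b q := by
  classical
  ext m
  simp only [coeff_weightedHomogeneousComponent, coeff_mul, ite_zero_mul_ite_zero,
    Finset.ite_sum_zero]
  refine Finset.sum_congr rfl fun ⟨m₁, m₂⟩ hm => ?_
  obtain rfl : m₁ + m₂ = m := Finset.HasAntidiagonal.mem_antidiagonal.1 hm
  by_cases hm₁ : coeff m₁ p = 0
  · simp [hm₁]
  by_cases hm₂ : coeff m₂ q = 0
  · simp [hm₂]
  refine if_congr ?_ rfl rfl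
  rw [map_add]
  exact ⟨hab (weight_mem_weightSupport hm₁) (weight_mem_weightSupport hm₂),
    fun ⟨h₁, h₂⟩ => congrArg₂ _ h₁ h₂⟩

lemma add_eq_of_uniqueAdd_weightSupport [NoZeroDivisors R]
    (hpq : IsWeightedHomogeneous w (p * q) N) (ha : a ∈ weightSupport w p)
    (hb : b ∈ weightSupport w q)
    (hab : UniqueAdd (weightSupport w p) (weightSupport w q) a b) : a + b = N := by
  by_contra hne
  have hcomp := hpq.weightedHomogeneousComponent_ne (a + b) hne
  rw [weightedHomogeneousComponent_mul_of_uniqueAdd hab] at hcomp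
  exact mul_ne_zero (weightedHomogeneousComponent_ne_zero ha)
    (weightedHomogeneousComponent_ne_zero hb) hcomp

lemma card_weightSupport_mul_card_weightSupport_le_one [TwoUniqueSums M] [NoZeroDivisors R]
    (hpq : IsWeightedHomogeneous w (p * q) N) :
    (weightSupport w p).card * (weightSupport w q).card ≤ 1 := by
  by_contra! hcard
  obtain ⟨⟨a, b⟩, hab, ⟨a', b'⟩, hab', hne, huniq, huniq'⟩ :=
    TwoUniqueSums.uniqueAdd_of_one_lt_card hcard
  simp only [Finset.mem_product] at hab hab'
  have hsum : a + b = a' + b' :=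
    (add_eq_of_uniqueAdd_weightSupport hpq hab.1 hab.2 huniq).trans
      (add_eq_of_uniqueAdd_weightSupport hpq hab'.1 hab'.2 huniq').symm
  obtain ⟨rfl, rfl⟩ := huniq' hab.1 hab.2 hsum
  exact hne rfl

end WeightSupport

lemma exists_isWeightedHomogeneous_of_mul [TwoUniqueSums M] [NoZeroDivisors R]
    (hpq : IsWeightedHomogeneous w (p * q) N) (h0 : p * q ≠ 0) :
    ∃ a b, a + b = N ∧ IsWeightedHomogeneous w p a ∧ IsWeightedHomogeneous w q b := by
  classical
  obtain ⟨a, ha⟩ := weightSupport_nonempty (w := w) (left_ne_zero_of_mul h0)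
  obtain ⟨b, hb⟩ := weightSupport_nonempty (w := w) (right_ne_zero_of_mul h0)
  have hcard := card_weightSupport_mul_card_weightSupport_le_one hpq
  have hp : IsWeightedHomogeneous w p a := isWeightedHomogeneous_of_card_weightSupport_le_one
    ((Nat.le_mul_of_pos_right _ (Finset.card_pos.2 ⟨b, hb⟩)).trans hcard) ha
  have hq : IsWeightedHomogeneous w q b := isWeightedHomogeneous_of_card_weightSupport_le_one
    ((Nat.le_mul_of_pos_left _ (Finset.card_pos.2 ⟨a, ha⟩)).trans hcard) hb
  exact ⟨a, b, (hp.mul hq).inj_right h0 hpq, hp, hq⟩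

end WeightedHomogeneous

lemma exists_eval_ne_zero_of_degreeOf_le_one {σ R : Type*} [CommRing R] [IsDomain R] [Finite σ]
    {p : MvPolynomial σ R} (hp : p ≠ 0) (hdeg : ∀ x, p.degreeOf x ≤ 1) : ∃ v, eval v p ≠ 0 := by
  classical
  by_contra! hzero
  refine hp (eq_zero_of_eval_zero_at_prod_finset p (fun _ => {0, 1}) (fun x => ?_)
    fun v _ => hzero v)
  rw [Finset.card_pair zero_ne_one]
  exact Nat.lt_succ_of_le (hdeg x)

section PartialEvaluation

variable {σ R : Type*} [CommSemiring R] (s : Set σ) (v : σ → R) {p : MvPolynomial σ R}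

open Classical in
/-- The partial evaluation which keeps the variables in `s` and replaces every other variable `x`
by the constant `v x`. -/
noncomputable def evalOutside : MvPolynomial σ R →ₐ[R] MvPolynomial σ R :=
  aeval (s.piecewise X fun x => C (v x))

variable {s}

lemma evalOutside_eq_self (hp : ↑p.vars ⊆ s) : evalOutside s v p = p := by
  classical
  calc evalOutside s v p = aeval X p :=
        eval₂Hom_congr' rfl (fun _ hx _ => s.piecewise_eq_of_mem _ _ (hp hx)) rfl
    _ = p := aeval_X_left_apply p

lemma evalOutside_eq_C_eval (hp : Disjoint ↑p.vars s) : evalOutside s v p = C (eval v p) := by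
  classical
  calc evalOutside s v p = aeval (fun x => C (v x)) p :=
        eval₂Hom_congr' rfl
          (fun _ hx _ => s.piecewise_eq_of_notMem _ _ (Set.disjoint_left.1 hp hx)) rfl
    _ = C (eval v p) := by
        simpa [Function.comp_def, coe_aeval_eq_eval]
          using aeval_algebraMap_apply (MvPolynomial σ R) v p

lemma exists_eq_sum_C_mul_of_mul_eq_sum {F κ : Type*} [Field F] [Fintype κ]
    {g h : MvPolynomial σ F} {P Q : κ → MvPolynomial σ F} {v : σ → F}
    (hg : ↑g.vars ⊆ s) (hh : Disjoint ↑h.vars s)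
    (hP : ∀ i, ↑(P i).vars ⊆ s) (hQ : ∀ i, Disjoint ↑(Q i).vars s)
    (hv : eval v h ≠ 0) (hgh : g * h = ∑ i, P i * Q i) :
    ∃ b : κ → F, g = ∑ i, C (b i) * P i := by
  have hsubst : g * C (eval v h) = ∑ i, P i * C (eval v (Q i)) := by
    simpa only [map_mul, map_sum, evalOutside_eq_self v hg, evalOutside_eq_C_eval v hh,
      evalOutside_eq_self v (hP _), evalOutside_eq_C_eval v (hQ _)]
      using congrArg (evalOutside s v) hgh
  refine ⟨fun i => eval v (Q i) * (eval v h)⁻¹, ?_⟩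
  calc g = g * C (eval v h) * C (eval v h)⁻¹ := by
        rw [mul_assoc, ← C_mul, mul_inv_cancel₀ hv, C_1, mul_one]
    _ = ∑ i, C (eval v (Q i) * (eval v h)⁻¹) * P i := by
        rw [hsubst, Finset.sum_mul]
        exact Finset.sum_congr rfl fun i _ => by rw [C_mul]; ring

end PartialEvaluation

section SetMultilinear

variable {ι : Type*} {τ : ι → Type*} [DecidableEq ι]

/-- The weight of the multigrading by blocks: a variable of block `j` has weight the `j`-th unit
vector. -/
def blockWeight (x : (j : ι) × τ j) : ι → ℕ :=
  Pi.single x.1 1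

variable [∀ j, Fintype (τ j)] {R : Type*} [CommSemiring R]

/-- Set-multilinearity with respect to the blocks `j ∈ A`, block `j` having the variables `⟨j, t⟩`:
every monomial has degree one in each of these blocks and degree zero in each of the others. -/
def IsSetMultilinear (A : Finset ι) (p : MvPolynomial ((j : ι) × τ j) R) : Prop :=
  ∀ m ∈ p.support, ∀ j, ∑ t, m ⟨j, t⟩ = if j ∈ A then 1 else 0

/-- The linear form on block `j` with coefficient vector `a`. -/
noncomputable def blockForm (j : ι) (a : τ j → R) : MvPolynomial ((j : ι) × τ j) R :=
  ∑ t, C (a t) * X ⟨j, t⟩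

lemma weight_blockWeight_apply (m : (j : ι) × τ j →₀ ℕ) (j : ι) :
    Finsupp.weight blockWeight m j = ∑ t, m ⟨j, t⟩ := by
  classical
  induction m using Finsupp.induction_linear with
  | zero => simp
  | add m₁ m₂ h₁ h₂ => simp [h₁, h₂, Finset.sum_add_distrib]
  | single x r =>
    obtain ⟨i, s⟩ := x
    obtain rfl | hij := eq_or_ne i j
    · simp [blockWeight, Finsupp.weight_single, Finsupp.single_apply]
    · simp [blockWeight, Finsupp.weight_single, hij.symm]

lemma isSetMultilinear_iff_isWeightedHomogeneous {A : Finset ι}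
    {p : MvPolynomial ((j : ι) × τ j) R} :
    IsSetMultilinear A p ↔
      IsWeightedHomogeneous blockWeight p (∑ j ∈ A, Pi.single j 1) := by
  simp only [IsSetMultilinear, IsWeightedHomogeneous, mem_support_iff, funext_iff,
    weight_blockWeight_apply, Finset.sum_apply, Finset.sum_pi_single]

lemma isWeightedHomogeneous_blockForm (j : ι) (a : τ j → R) :
    IsWeightedHomogeneous blockWeight (blockForm j a) (Pi.single j 1) :=
  .sum _ _ _ fun t _ => (isWeightedHomogeneous_X R blockWeight ⟨j, t⟩).C_mul (a t)

lemma isSetMultilinear_prod_blockForm (A : Finset ι) (a : (j : ι) → τ j → R) :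
    IsSetMultilinear A (∏ j ∈ A, blockForm j (a j)) :=
  isSetMultilinear_iff_isWeightedHomogeneous.2 <|
    .prod _ _ _ fun j _ => isWeightedHomogeneous_blockForm j (a j)

namespace IsSetMultilinear

variable {A A₁ A₂ : Finset ι} {p : MvPolynomial ((j : ι) × τ j) R}

lemma sum {κ : Type*} {s : Finset κ} {P : κ → MvPolynomial ((j : ι) × τ j) R}
    (hP : ∀ i ∈ s, IsSetMultilinear A (P i)) : IsSetMultilinear A (∑ i ∈ s, P i) :=
  isSetMultilinear_iff_isWeightedHomogeneous.2 <|
    .sum _ _ _ fun i hi => isSetMultilinear_iff_isWeightedHomogeneous.1 (hP i hi)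

lemma apply_le (hp : IsSetMultilinear A p) {m : (j : ι) × τ j →₀ ℕ} (hm : m ∈ p.support)
    (x : (j : ι) × τ j) : m x ≤ if x.1 ∈ A then 1 else 0 :=
  hp m hm x.1 ▸ Finset.single_le_sum (f := fun t => m ⟨x.1, t⟩) (fun _ _ => Nat.zero_le _)
    (Finset.mem_univ x.2)

lemma degreeOf_le_one (hp : IsSetMultilinear A p) (x : (j : ι) × τ j) : p.degreeOf x ≤ 1 :=
  degreeOf_le_iff.2 fun _ hm => (hp.apply_le hm x).trans (by split_ifs <;> simp)

lemma vars_subset (hp : IsSetMultilinear A p) :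
    (p.vars : Set ((j : ι) × τ j)) ⊆ Sigma.fst ⁻¹' (A : Set ι) := by
  intro x hx
  obtain ⟨m, hm, hxm⟩ := (mem_vars_iff_mem_support x).1 hx
  by_contra hxA
  have hle := hp.apply_le hm x
  rw [if_neg (by simpa using hxA), Nat.le_zero] at hle
  exact Finsupp.mem_support_iff.1 hxm hle

lemma disjoint_vars (hp : IsSetMultilinear A₂ p) (hA : Disjoint A₁ A₂) :
    Disjoint (p.vars : Set ((j : ι) × τ j)) (Sigma.fst ⁻¹' (A₁ : Set ι)) :=
  ((Finset.disjoint_coe.2 hA.symm).preimage _).mono_left hp.vars_subset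

lemma exists_of_mul [NoZeroDivisors R] {g h : MvPolynomial ((j : ι) × τ j) R}
    (hgh : IsSetMultilinear A (g * h)) (h0 : g * h ≠ 0) :
    ∃ A₁ A₂ : Finset ι, Disjoint A₁ A₂ ∧ A₁ ∪ A₂ = A ∧
      IsSetMultilinear A₁ g ∧ IsSetMultilinear A₂ h := by
  obtain ⟨a, b, hab, hg, hh⟩ := exists_isWeightedHomogeneous_of_mul
    (isSetMultilinear_iff_isWeightedHomogeneous.1 hgh) h0
  have hdeg (j : ι) : a j + b j = if j ∈ A then 1 else 0 := by
    simpa [Finset.sum_apply] using congrFun hab j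
  refine ⟨{j ∈ A | a j = 1}, {j ∈ A | a j ≠ 1}, Finset.disjoint_filter_filter_not _ _ _,
    Finset.filter_union_filter_not_eq _ _, fun m hm j => ?_, fun m hm j => ?_⟩
  · rw [← weight_blockWeight_apply, hg (mem_support_iff.1 hm)]
    grind
  · rw [← weight_blockWeight_apply, hh (mem_support_iff.1 hm)]
    grind

end IsSetMultilinear

end SetMultilinear

theorem stmt_9_general {F ι κ : Type*} [Field F] [Fintype ι] [DecidableEq ι] [Fintype κ]
    {τ : ι → Type*} [∀ j, Fintype (τ j)] (c : κ → (j : ι) → τ j → F)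
    {g h : MvPolynomial ((j : ι) × τ j) F} (h0 : g * h ≠ 0)
    (hgh : g * h = ∑ i, ∏ j, blockForm j (c i j)) :
    ∃ A₁ A₂ : Finset ι, Disjoint A₁ A₂ ∧ A₁ ∪ A₂ = Finset.univ ∧
      IsSetMultilinear A₁ g ∧ IsSetMultilinear A₂ h ∧
      ∃ b : κ → F, g = ∑ i, C (b i) * ∏ j ∈ A₁, blockForm j (c i j) := by
  have hf : IsSetMultilinear Finset.univ (g * h) :=
    hgh ▸ .sum fun i _ => isSetMultilinear_prod_blockForm _ (c i)
  obtain ⟨A₁, A₂, hdisj, hunion, hg, hh⟩ := hf.exists_of_mul h0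
  obtain ⟨v, hv⟩ :=
    exists_eval_ne_zero_of_degreeOf_le_one (right_ne_zero_of_mul h0) hh.degreeOf_le_one
  refine ⟨A₁, A₂, hdisj, hunion, hg, hh, exists_eq_sum_C_mul_of_mul_eq_sum
    (Q := fun i => ∏ j ∈ A₂, blockForm j (c i j)) hg.vars_subset (hh.disjoint_vars hdisj)
    (fun i => (isSetMultilinear_prod_blockForm A₁ (c i)).vars_subset)
    (fun i => (isSetMultilinear_prod_blockForm A₂ (c i)).disjoint_vars hdisj) hv ?_⟩
  simp only [hgh, ← hunion, Finset.prod_union hdisj]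

/-- Set-multilinear ΣΠΣ(k) circuits are closed under factoring: if a nonzero
f computed by a set-multilinear ΣΠΣ(k) circuit (w.r.t. blocks X_1 ⊔ ⋯ ⊔ X_d) factors as
f = g·h, then the blocks split into disjoint sets A₁ ∪ A₂ = [d] so that g is set-multilinear
w.r.t. the A₁-blocks and h w.r.t. the A₂-blocks (every monomial picks exactly one variable from
each block of the respective collection and no other variables), and g is computed by a
set-multilinear ΣΠΣ(k) circuit over the A₁-blocks (gates being scalar multiples of products of
nonzero linear forms, one per block of A₁). -/
theorem stmt_9 {F : Type*} [Field F] {d k : ℕ} (hd : 1 ≤ d)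
    {n : Fin d → ℕ}
    (c : Fin k → (j : Fin d) → Fin (n j) → F) (hc : ∀ i j, c i j ≠ 0)
    (f g h : MvPolynomial ((j : Fin d) × Fin (n j)) F)
    (hf0 : f ≠ 0)
    (hf : f = ∑ i, ∏ j : Fin d, ∑ t : Fin (n j), C (c i j t) * X ⟨j, t⟩)
    (hgh : f = g * h) :
    ∃ A₁ A₂ : Finset (Fin d), Disjoint A₁ A₂ ∧ A₁ ∪ A₂ = Finset.univ ∧
      (∀ m ∈ g.support, ∀ j : Fin d,
        (∑ t : Fin (n j), m ⟨j, t⟩) = if j ∈ A₁ then 1 else 0) ∧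
      (∀ m ∈ h.support, ∀ j : Fin d,
        (∑ t : Fin (n j), m ⟨j, t⟩) = if j ∈ A₂ then 1 else 0) ∧
      ∃ (b : Fin k → F) (c' : Fin k → (j : Fin d) → Fin (n j) → F),
        (∀ i, ∀ j ∈ A₁, c' i j ≠ 0) ∧
        g = ∑ i, C (b i) * ∏ j ∈ A₁, ∑ t : Fin (n j), C (c' i j t) * X ⟨j, t⟩ := by
  obtain ⟨A₁, A₂, hdisj, hunion, hg, hh, b, hgb⟩ := stmt_9_general c (hgh ▸ hf0) (hgh ▸ hf)
  exact ⟨A₁, A₂, hdisj, hunion, hg, hh, b, c, fun i j _ => hc i j, hgb⟩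
end

section
/- Let C = T_1 + ⋯ + T_k be a set-multilinear ΣΠΣ(k) circuit of degree d with respect to the partition X = X_1 ⊔ ⋯ ⊔ X_d, such that Σ_{i∈U} T_i ≠ 0 for every nonempty subset U ⊆ {1,…,k}. Fix a subset J ⊆ {1,…,d} of blocks to keep alive, let S ⊆ F be a finite nonempty set, and let σ assign to each variable in ⊔_{j∉J} X_j an independent uniformly random value from S. Then with probability at least 1 − 2^k·d/|S|, for every nonempty subset U ⊆ {1,…,k} the restricted polynomial (Σ_{i∈U} T_i)|_σ is nonzero; in particular, with this probability, C|_σ = Σ_{i=1}^k T_i|_σ is a nonzero and minimal set-multilinear ΣΠΣ(k) circuit with respect to the partition ⊔_{j∈J} X_j (each restricted gate being a nonzero scalar times a product of linear forms in the blocks X_j, j ∈ J). -/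
open MvPolynomial
open scoped Classical

/-! Read each subcircuit `∑ i ∈ U, T i` as a polynomial in the dead variables whose coefficients are
polynomials in the live ones. It is nonzero of degree at most the number of dead blocks, and the
restriction by `σ` is its value at the constants `σ v`, so Schwartz–Zippel over the coefficient
domain bounds the probability that it vanishes. A union bound over the at most `2 ^ k` nonempty
sets `U` shows that usually none vanishes. Restricting a single gate only replaces its dead linear
forms by scalars, and these are nonzero because the restricted gate, the subcircuit of a singleton
`U`, is. -/

section UnionBound

variable {K Ω I : Type*} [Field K] [LinearOrder K] [IsStrictOrderedRing K]

theorem one_sub_card_mul_le_card_filter_div {s : Finset Ω} (hs : s.Nonempty) (t : Finset I)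
    (bad : I → Ω → Prop) [∀ i, DecidablePred (bad i)] {ε : K}
    (hbad : ∀ i ∈ t, ((s.filter (bad i)).card : K) / s.card ≤ ε) :
    1 - t.card * ε ≤ ((s.filter fun ω => ∀ i ∈ t, ¬ bad i ω).card : K) / s.card := by
  have hs_pos : (0 : K) < s.card := by exact_mod_cast hs.card_pos
  have hcover : s ⊆
      (s.filter fun ω => ∀ i ∈ t, ¬ bad i ω) ∪ t.biUnion fun i => s.filter (bad i) := by
    intro ω hω
    simp only [Finset.mem_union, Finset.mem_filter, Finset.mem_biUnion]
    by_cases h : ∀ i ∈ t, ¬ bad i ω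
    · exact Or.inl ⟨hω, h⟩
    · push Not at h
      obtain ⟨i, hi, hiω⟩ := h
      exact Or.inr ⟨i, hi, hω, hiω⟩
  have hcard : (s.card : K) ≤ (s.filter fun ω => ∀ i ∈ t, ¬ bad i ω).card +
      ∑ i ∈ t, ((s.filter (bad i)).card : K) := by
    exact_mod_cast (Finset.card_le_card hcover).trans <|
      (Finset.card_union_le _ _).trans (Nat.add_le_add_left Finset.card_biUnion_le _)
  have hsum : ∑ i ∈ t, ((s.filter (bad i)).card : K) ≤ t.card * (ε * s.card) := by
    rw [← nsmul_eq_mul]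
    exact Finset.sum_le_card_nsmul t _ _ fun i hi => (div_le_iff₀ hs_pos).1 (hbad i hi)
  rw [le_div_iff₀ hs_pos]
  linarith

end UnionBound

section SchwartzZippel

variable {A R ι : Type*} [CommRing R] [IsDomain R] [Fintype ι] [DecidableEq ι]

theorem card_filter_eval_eq_zero_div_le {p : MvPolynomial ι R} (hp : p ≠ 0) (S : Finset R) :
    (((Fintype.piFinset fun _ : ι => S).filter fun f => eval f p = 0).card : ℚ≥0) /
      (Fintype.piFinset fun _ : ι => S).card ≤ p.totalDegree / S.card := by
  let e := Fintype.equivFin ι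
  have hrename : renameEquiv R e p ≠ 0 := (EmbeddingLike.map_ne_zero_iff).2 hp
  have hcard : ((Fintype.piFinset fun _ : ι => S).filter fun f => eval f p = 0).card =
      ((Fintype.piFinset fun _ : Fin (Fintype.card ι) => S).filter
        fun f => eval f (renameEquiv R e p) = 0).card := by
    refine Finset.card_equiv (e.arrowCongr (Equiv.refl R)) fun f => ?_
    simp [e.symm.forall_congr_left, eval_rename, Function.comp_def]
  have hzippel := schwartz_zippel_totalDegree hrename S
  rw [totalDegree_renameEquiv] at hzippel
  simpa [hcard] using hzippel

theorem card_filter_eval_comp_eq_zero_div_le {p : MvPolynomial ι R} (hp : p ≠ 0) {φ : A → R}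
    (hφ : Function.Injective φ) (S : Finset A) :
    (((Fintype.piFinset fun _ : ι => S).filter fun σ => eval (φ ∘ σ) p = 0).card : ℚ≥0) /
      (Fintype.piFinset fun _ : ι => S).card ≤ p.totalDegree / S.card := by
  have hcomp : Function.Injective fun (σ : ι → A) i => φ (σ i) := hφ.comp_left
  have hzippel := card_filter_eval_eq_zero_div_le hp (S.image φ)
  rw [Fintype.piFinset_image, Finset.filter_image, Finset.card_image_of_injective _ hcomp,
    Finset.card_image_of_injective _ hcomp, Finset.card_image_of_injective _ hφ] at hzippel
  exact hzippel

end SchwartzZippel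

section PartialEvaluation

variable {R V : Type*} [CommRing R] (live : V → Prop) [DecidablePred live]

/-- The substitution that keeps the variables satisfying `live` and replaces every other (dead)
variable by its value under `σ`. The result stays in the ring of all variables. -/
noncomputable def partialEval (σ : {v // ¬ live v} → R) : MvPolynomial V R →ₐ[R] MvPolynomial V R :=
  aeval fun v => if h : live v then X v else C (σ ⟨v, h⟩)

/-- A polynomial regarded as a polynomial in its dead variables, with coefficients polynomials in
the live ones. For the coefficients we use the ring of all variables. -/
noncomputable def separateDead :
    MvPolynomial V R →ₐ[R] MvPolynomial {v // ¬ live v} (MvPolynomial V R) :=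
  aeval fun v => if h : live v then C (X v) else X ⟨v, h⟩

theorem eval_separateDead (σ : {v // ¬ live v} → R) (f : MvPolynomial V R) :
    eval (C ∘ σ) (separateDead live f) = partialEval live σ f := by
  have hcomp : ((aeval (C ∘ σ : _ → MvPolynomial V R)).restrictScalars R).comp
      (separateDead live) = partialEval live σ := by
    ext v
    by_cases h : live v <;> simp [separateDead, partialEval, h]
  simpa [aeval_eq_eval] using DFunLike.congr_fun hcomp f

theorem separateDead_injective : Function.Injective (separateDead (R := R) live) := by
  have hcomp : ((aeval fun v => (X v.1 : MvPolynomial V R)).restrictScalars R).comp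
      (separateDead live) = AlgHom.id R _ := by
    ext v
    by_cases h : live v <;> simp [separateDead, h]
  intro f g hfg
  have hid := DFunLike.congr_fun hcomp
  simp only [AlgHom.comp_apply, AlgHom.id_apply] at hid
  rw [← hid f, hfg, hid g]

variable [IsDomain R] [Fintype V] [DecidableEq V]

theorem card_filter_partialEval_eq_zero_div_le {f : MvPolynomial V R} (hf : f ≠ 0) (S : Finset R) :
    (((Fintype.piFinset fun _ : {v // ¬ live v} => S).filter
        fun σ => partialEval live σ f = 0).card : ℚ≥0) /
      (Fintype.piFinset fun _ : {v // ¬ live v} => S).card ≤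
      (separateDead live f).totalDegree / S.card := by
  have hne : separateDead live f ≠ 0 :=
    (map_ne_zero_iff _ (separateDead_injective live)).2 hf
  simpa only [eval_separateDead] using card_filter_eval_comp_eq_zero_div_le hne (C_injective V R) S

theorem one_sub_le_card_filter_partialEval_ne_zero_div {I : Type*} (t : Finset I)
    {f : I → MvPolynomial V R} (hf : ∀ i ∈ t, f i ≠ 0) {D : ℕ}
    (hD : ∀ i ∈ t, (separateDead live (f i)).totalDegree ≤ D) {S : Finset R} (hS : S.Nonempty) :
    1 - t.card * ((D : ℝ) / S.card) ≤
      (((Fintype.piFinset fun _ : {v // ¬ live v} => S).filter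
        fun σ => ∀ i ∈ t, partialEval live σ (f i) ≠ 0).card : ℝ) /
      (Fintype.piFinset fun _ : {v // ¬ live v} => S).card := by
  have hvanish : ∀ i ∈ t, (((Fintype.piFinset fun _ : {v // ¬ live v} => S).filter
      fun σ => partialEval live σ (f i) = 0).card : ℝ) /
      (Fintype.piFinset fun _ : {v // ¬ live v} => S).card ≤ (D : ℝ) / S.card := by
    intro i hi
    refine le_trans ?_ (div_le_div_of_nonneg_right (Nat.cast_le.2 (hD i hi)) (Nat.cast_nonneg _))
    have hle := (NNRat.cast_le (K := ℝ)).2 (card_filter_partialEval_eq_zero_div_le live (hf i hi) S)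
    simpa only [NNRat.cast_div, NNRat.cast_natCast] using hle
  exact one_sub_card_mul_le_card_filter_div (Fintype.piFinset_nonempty.2 fun _ => hS) t
    (fun i σ => partialEval live σ (f i) = 0) hvanish

end PartialEvaluation

section SetMultilinear

variable {R β : Type*} [CommRing R] {κ : β → Type*} [∀ j, Fintype (κ j)]

/-- The linear form in the variables of block `j` with coefficient vector `a`. -/
noncomputable def linearForm (j : β) (a : κ j → R) : MvPolynomial ((j : β) × κ j) R :=
  ∑ t, C (a t) * X ⟨j, t⟩

/-- The set-multilinear product gate, one linear form per block; `a j` holds the coefficients of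
the form in block `j`. -/
noncomputable def productGate [Fintype β] (a : (j : β) → κ j → R) :
    MvPolynomial ((j : β) × κ j) R :=
  ∏ j, linearForm j (a j)

variable [DecidableEq β] {J : Finset β}

theorem partialEval_linearForm_of_mem {j : β} (hj : j ∈ J) (a : κ j → R)
    (σ : {x : (j : β) × κ j // x.1 ∉ J} → R) :
    partialEval (fun x => x.1 ∈ J) σ (linearForm j a) = linearForm j a := by
  simp [partialEval, linearForm, hj]

theorem partialEval_linearForm_of_notMem {j : β} (hj : j ∉ J) (a : κ j → R)
    (σ : {x : (j : β) × κ j // x.1 ∉ J} → R) :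
    partialEval (fun x => x.1 ∈ J) σ (linearForm j a) = C (∑ t, a t * σ ⟨⟨j, t⟩, hj⟩) := by
  simp [partialEval, linearForm, hj]

theorem totalDegree_separateDead_linearForm_le [Nontrivial R] (j : β) (a : κ j → R) :
    (separateDead (fun x => x.1 ∈ J) (linearForm j a)).totalDegree ≤ if j ∈ J then 0 else 1 := by
  rw [linearForm, map_sum]
  refine totalDegree_finsetSum_le fun t _ => ?_
  have hconst : separateDead (fun x : (j : β) × κ j => x.1 ∈ J) (C (a t)) = C (C (a t)) :=
    (separateDead _).commutes (a t)
  rw [map_mul, hconst]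
  refine (totalDegree_mul _ _).trans ?_
  by_cases hj : j ∈ J <;> simp [separateDead, hj]

variable [Fintype β]

theorem exists_partialEval_productGate_eq (a : (j : β) → κ j → R)
    (σ : {x : (j : β) × κ j // x.1 ∉ J} → R) :
    ∃ b : R, partialEval (fun x => x.1 ∈ J) σ (productGate a) =
      C b * ∏ j ∈ J, linearForm j (a j) := by
  refine ⟨∏ j : {j // j ∉ J}, ∑ t, a j t * σ ⟨⟨j, t⟩, j.2⟩, ?_⟩
  rw [productGate, map_prod, ← Finset.prod_compl_mul_prod J, map_prod]
  congr 1
  · rw [Finset.prod_subtype Jᶜ (p := (· ∉ J)) fun j => Finset.mem_compl]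
    exact Finset.prod_congr rfl fun j _ => partialEval_linearForm_of_notMem j.2 (a j) σ
  · exact Finset.prod_congr rfl fun j hj => partialEval_linearForm_of_mem hj (a j) σ

theorem exists_partialEval_productGate_eq_of_ne_zero {a : (j : β) → κ j → R}
    {σ : {x : (j : β) × κ j // x.1 ∉ J} → R}
    (hne : partialEval (fun x => x.1 ∈ J) σ (productGate a) ≠ 0) :
    ∃ (b : R) (a' : (j : β) → κ j → R), b ≠ 0 ∧ (∀ j ∈ J, a' j ≠ 0) ∧
      partialEval (fun x => x.1 ∈ J) σ (productGate a) = C b * ∏ j ∈ J, linearForm j (a' j) := by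
  obtain ⟨b, hb⟩ := exists_partialEval_productGate_eq a σ
  refine ⟨b, a, ?_, fun j hj hzero => ?_, hb⟩
  · rintro rfl
    exact hne (by rw [hb, C_0, zero_mul])
  · have hform : linearForm j (a j) = 0 := by simp [linearForm, hzero]
    exact hne (by rw [hb, Finset.prod_eq_zero hj hform, mul_zero])

theorem totalDegree_separateDead_sum_productGate_le [Nontrivial R] {ι : Type*} (U : Finset ι)
    (c : ι → (j : β) → κ j → R) :
    (separateDead (fun x => x.1 ∈ J) (∑ i ∈ U, productGate (c i))).totalDegree ≤ Jᶜ.card := by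
  rw [map_sum]
  refine totalDegree_finsetSum_le fun i _ => ?_
  rw [productGate, map_prod]
  calc _ ≤ ∑ j, (separateDead (fun x : (j : β) × κ j => x.1 ∈ J)
          (linearForm j (c i j))).totalDegree := totalDegree_finsetProd _ _
    _ ≤ ∑ j, if j ∈ J then 0 else 1 :=
        Finset.sum_le_sum fun j _ => totalDegree_separateDead_linearForm_le j (c i j)
    _ = Jᶜ.card := by
        simp [Finset.sum_ite, Finset.filter_notMem_eq_sdiff, Finset.compl_eq_univ_sdiff]

theorem one_sub_le_card_filter_sum_productGate_ne_zero_div [IsDomain R] {ι : Type*} [Fintype ι]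
    [∀ j, DecidableEq (κ j)] {c : ι → (j : β) → κ j → R}
    (hmin : ∀ U : Finset ι, U.Nonempty → ∑ i ∈ U, productGate (c i) ≠ 0)
    (J : Finset β) {S : Finset R} (hS : S.Nonempty) :
    1 - ((2 ^ Fintype.card ι * Jᶜ.card : ℕ) : ℝ) / S.card ≤
      (((Fintype.piFinset fun _ : {x : (j : β) × κ j // x.1 ∉ J} => S).filter fun σ =>
        ∀ U : Finset ι, U.Nonempty →
          partialEval (fun x => x.1 ∈ J) σ (∑ i ∈ U, productGate (c i)) ≠ 0).card : ℝ) /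
      (Fintype.piFinset fun _ : {x : (j : β) × κ j // x.1 ∉ J} => S).card := by
  let t : Finset (Finset ι) := Finset.univ.filter Finset.Nonempty
  have ht : t.card ≤ 2 ^ Fintype.card ι := (Finset.card_filter_le _ _).trans (by simp)
  have hprob := one_sub_le_card_filter_partialEval_ne_zero_div
    (fun x : (j : β) × κ j => x.1 ∈ J) t (f := fun U => ∑ i ∈ U, productGate (c i))
    (fun U hU => hmin U (Finset.mem_filter.1 hU).2)
    (fun U _ => totalDegree_separateDead_sum_productGate_le U c) hS
  have hbound : 1 - ((2 ^ Fintype.card ι * Jᶜ.card : ℕ) : ℝ) / S.card ≤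
      1 - t.card * ((Jᶜ.card : ℝ) / S.card) := by
    rw [Nat.cast_mul, mul_div_assoc]
    gcongr
  simpa only [t, Finset.mem_filter, Finset.mem_univ, true_and] using hbound.trans hprob

end SetMultilinear

theorem stmt_17_general {R ι β : Type*} [CommRing R] [IsDomain R] [Fintype ι] [Fintype β]
    [DecidableEq β] {κ : β → Type*} [∀ j, Fintype (κ j)] [∀ j, DecidableEq (κ j)]
    (c : ι → (j : β) → κ j → R)
    (hmin : ∀ U : Finset ι, U.Nonempty → ∑ i ∈ U, productGate (c i) ≠ 0)
    (J : Finset β) {S : Finset R} (hS : S.Nonempty) :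
    (1 : ℝ) - ((2 ^ Fintype.card ι * Jᶜ.card : ℕ) : ℝ) / S.card ≤
      (((Fintype.piFinset fun _ : {x : (j : β) × κ j // x.1 ∉ J} => S).filter fun σ =>
        (∀ U : Finset ι, U.Nonempty →
          partialEval (fun x => x.1 ∈ J) σ (∑ i ∈ U, productGate (c i)) ≠ 0) ∧
        ∀ i, ∃ (b : R) (c' : (j : β) → κ j → R), b ≠ 0 ∧ (∀ j ∈ J, c' j ≠ 0) ∧
          partialEval (fun x => x.1 ∈ J) σ (productGate (c i)) =
            C b * ∏ j ∈ J, linearForm j (c' j)).card : ℝ) /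
      (Fintype.piFinset fun _ : {x : (j : β) × κ j // x.1 ∉ J} => S).card := by
  have hgates : ∀ σ : {x : (j : β) × κ j // x.1 ∉ J} → R,
      (∀ U : Finset ι, U.Nonempty →
        partialEval (fun x => x.1 ∈ J) σ (∑ i ∈ U, productGate (c i)) ≠ 0) →
      ∀ i, partialEval (fun x => x.1 ∈ J) σ (productGate (c i)) ≠ 0 := fun σ hne i => by
    simpa only [Finset.sum_singleton] using hne {i} (Finset.singleton_nonempty i)
  simpa only [and_iff_left_of_imp fun hne i =>
    exists_partialEval_productGate_eq_of_ne_zero (hgates _ hne i)] using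
    one_sub_le_card_filter_sum_productGate_ne_zero_div hmin J hS

/-- Let C = T_1 + ⋯ + T_k be a set-multilinear ΣΠΣ(k) circuit of degree d
(gates T_i = ∏_j ℓ_{i,j} with ℓ_{i,j} a nonzero linear form in block X_j, given by coefficients
`c i j`) such that Σ_{i∈U} T_i ≠ 0 for every nonempty U ⊆ [k].  Fix a set J of blocks to keep
alive and assign to each variable of the other blocks an independent uniform value from a finite
nonempty S ⊆ F (sample space Ω = S^{dead variables}).  Then with probability at least
1 − 2^k·d/|S|: every nonempty-subset sum (Σ_{i∈U} T_i)|_σ is nonzero, and each restricted gate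
T_i|_σ is a nonzero scalar times a product of nonzero linear forms in the blocks X_j, j ∈ J
(so C|_σ is a nonzero minimal set-multilinear ΣΠΣ(k) circuit w.r.t. ⊔_{j∈J} X_j). -/
theorem stmt_17 {F : Type*} [Field F] {d k : ℕ} (hd : 1 ≤ d) (hk : 1 ≤ k)
    {n : Fin d → ℕ}
    (c : Fin k → (j : Fin d) → Fin (n j) → F) (hc : ∀ i j, c i j ≠ 0)
    (T : Fin k → MvPolynomial ((j : Fin d) × Fin (n j)) F)
    (hT : ∀ i, T i = ∏ j : Fin d, ∑ t : Fin (n j), C (c i j t) * X ⟨j, t⟩)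
    (hmin : ∀ U : Finset (Fin k), U.Nonempty → (∑ i ∈ U, T i) ≠ 0)
    (J : Finset (Fin d)) (S : Finset F) (hS : S.Nonempty) :
    (1 : ℝ) - ((2 ^ k * d : ℕ) : ℝ) / (S.card : ℝ) ≤
      (((Fintype.piFinset
            fun _ : {x : (j : Fin d) × Fin (n j) // x.1 ∉ J} => S).filter
          (fun σ : {x : (j : Fin d) × Fin (n j) // x.1 ∉ J} → F =>
            (∀ U : Finset (Fin k), U.Nonempty →
              aeval (fun x : (j : Fin d) × Fin (n j) =>
                  if h : x.1 ∈ J then (X x : MvPolynomial ((j : Fin d) × Fin (n j)) F)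
                  else C (σ ⟨x, h⟩)) (∑ i ∈ U, T i) ≠ 0) ∧
            ∀ i : Fin k, ∃ (b : F) (c' : (j : Fin d) → Fin (n j) → F),
              b ≠ 0 ∧ (∀ j ∈ J, c' j ≠ 0) ∧
              aeval (fun x : (j : Fin d) × Fin (n j) =>
                  if h : x.1 ∈ J then (X x : MvPolynomial ((j : Fin d) × Fin (n j)) F)
                  else C (σ ⟨x, h⟩)) (T i)
                = C b * ∏ j ∈ J, ∑ t : Fin (n j), C (c' j t) * X ⟨j, t⟩)).card : ℝ)
        / ((Fintype.piFinset
              fun _ : {x : (j : Fin d) × Fin (n j) // x.1 ∉ J} => S).card : ℝ) := by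
  obtain rfl : T = fun i => productGate (c i) := funext hT
  have hdead : Jᶜ.card ≤ d := (Finset.card_le_univ _).trans_eq (Fintype.card_fin d)
  have hprob := stmt_17_general c hmin J hS
  simp only [partialEval, linearForm, Fintype.card_fin] at hprob
  exact hprob.trans' (by gcongr)
end
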